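/- There is an absolute constant c > 0 such that for every integer d ≥ 1 and every α ∈ (0, 1/600], there exists a set C of d-dimensional Gaussian measures with the following two properties: (i) C is an α-cover of G_d in total variation distance, i.e., for every g ∈ G_d there exists g' ∈ C with dtv(g, g') ≤ α; and (ii) C is locally small, i.e., for every g ∈ G_d, the set {g' ∈ C : dtv(g', g) ≤ 2α} has cardinality at most 2^{c·d²}. -/

import Mathlib

open MeasureTheory ProbabilityTheory Matrix

/-- Total variation distance between two measures. -/
noncomputable def tvDist {X : Type*} [MeasurableSpace X] (μ ν : Measure X) : ℝ :=
  ⨆ E : {E : Set X // MeasurableSet E}, |(μ E.1).toReal - (ν E.1).toReal|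

/-- Total variation distance from a measure to a family of measures. -/
noncomputable def tvDistSet {X : Type*} [MeasurableSpace X] (g : Measure X)
    (F : Set (Measure X)) : ℝ :=
  ⨅ f : F, tvDist g f.1

/-- A `(C, α)`-accurate `(m, ρ, L)`-stable list decoder for `F`. -/
def IsStableListDecoder {X : Type*} [MeasurableSpace X] (F : Set (Measure X))
    (C α : ℝ) (m : ℕ) (ρ : ℝ) (L : ℝ)
    (A : (Fin m → X) → Set (Measure X)) : Prop :=
  (∀ S, (A S).Finite ∧ ((A S).ncard : ℝ) ≤ L ∧ ∀ μ ∈ A S, IsProbabilityMeasure μ) ∧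
  (∀ g : Measure X, IsProbabilityMeasure g →
    ∃ gt : Measure X, IsProbabilityMeasure gt ∧
      MeasurableSet {S : Fin m → X | gt ∈ A S} ∧
      ENNReal.ofReal ρ ≤ Measure.pi (fun _ : Fin m => g) {S | gt ∈ A S} ∧
      tvDist gt g ≤ α + C * tvDistSet g F)

instance {X : Type*} [MeasurableSpace X] : MeasurableSpace (ProbabilityMeasure X) :=
  inferInstanceAs (MeasurableSpace {μ : Measure X // IsProbabilityMeasure μ})

/-- `(ε, δ)`-differential privacy of a kernel on datasets of size `n`. -/
def IsDPKernel {X Y : Type*} [MeasurableSpace X] [MeasurableSpace Y] {n : ℕ}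
    (M : Kernel (Fin n → X) Y) (ε δ : ℝ) : Prop :=
  ∀ D D' : Fin n → X, (∃ i, D i ≠ D' i ∧ ∀ j, j ≠ i → D j = D' j) →
    ∀ E : Set Y, MeasurableSet E →
      M D E ≤ ENNReal.ofReal (Real.exp ε) * M D' E + ENNReal.ofReal δ

/-- `F` is `(ε,δ)`-privately `C`-agnostic `(n,α,β)`-learnable. -/
def PrivAgnosticLearnable {X : Type*} [MeasurableSpace X] (F : Set (Measure X))
    (ε δ C : ℝ) (n : ℕ) (α β : ℝ) : Prop :=
  ∃ M : Kernel (Fin n → X) (ProbabilityMeasure X), IsMarkovKernel M ∧ IsDPKernel M ε δ ∧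
    ∀ g : Measure X, IsProbabilityMeasure g →
      ENNReal.ofReal (1 - β) ≤
        ∫⁻ S, M S {f : ProbabilityMeasure X | tvDist (f : Measure X) g ≤ C * tvDistSet g F + α}
          ∂(Measure.pi fun _ : Fin n => g)

/-- The class of `k`-mixtures of `F`. -/
noncomputable def kmix {X : Type*} [MeasurableSpace X] (k : ℕ) (F : Set (Measure X)) :
    Set (Measure X) :=
  {ν | ∃ (w : Fin k → ℝ) (f : Fin k → Measure X),
    (∀ i, 0 ≤ w i) ∧ (∑ i, w i = 1) ∧ (∀ i, f i ∈ F) ∧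
    ν = ∑ i, ENNReal.ofReal (w i) • f i}

/-- Density of the `d`-dimensional Gaussian with mean `μ` and covariance `S`. -/
noncomputable def gaussianPdf (d : ℕ) (μ : Fin d → ℝ) (S : Matrix (Fin d) (Fin d) ℝ)
    (x : Fin d → ℝ) : ℝ :=
  (Real.sqrt ((2 * Real.pi) ^ d * S.det))⁻¹ *
    Real.exp (-(1 / 2) * ((x - μ) ⬝ᵥ (S⁻¹ *ᵥ (x - μ))))

/-- The family of `d`-dimensional Gaussian measures. -/
noncomputable def Gd (d : ℕ) : Set (Measure (Fin d → ℝ)) :=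
  {ν | ∃ (μ : Fin d → ℝ) (S : Matrix (Fin d) (Fin d) ℝ), S.PosDef ∧
    ν = volume.withDensity fun x => ENNReal.ofReal (gaussianPdf d μ S x)}


/-! ### One-dimensional Gaussian computations -/

/-- The geometric interpolation of the standard normal density and the `N(m, v)` density. -/
noncomputable def gint (r m v x : ℝ) : ℝ :=
  (Real.sqrt (2 * Real.pi))⁻¹ *
    Real.exp (-(1 - r) * x ^ 2 / 2 + r * (-(Real.log v) / 2 - (x - m) ^ 2 / (2 * v)))

/-- Value of the integral of `gint`. -/
noncomputable def gval (r m v : ℝ) : ℝ :=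
  Real.exp ((r ^ 2 * m ^ 2 / (v ^ 2 * (1 - r + r / v)) - r * m ^ 2 / v) / 2
    - r / 2 * Real.log v) / Real.sqrt (1 - r + r / v)

lemma gint_eq (r m v x : ℝ) (hv : 0 < v) (hw : 0 < 1 - r + r / v) :
    gint r m v x = (Real.sqrt (2 * Real.pi))⁻¹ *
      Real.exp ((r ^ 2 * m ^ 2 / (v ^ 2 * (1 - r + r / v)) - r * m ^ 2 / v) / 2
        - r / 2 * Real.log v) *
      Real.exp (-((1 - r + r / v) / 2) * (x - r * m / (v * (1 - r + r / v))) ^ 2) := by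
  unfold gint
  rw [mul_assoc, ← Real.exp_add]
  congr 2
  set w := 1 - r + r / v with hwdef
  have hv' := hv.ne'
  have hw' := hw.ne'
  have hr : 1 - r = w - r / v := by rw [hwdef]; ring
  rw [hr]
  field_simp
  ring

lemma gint_integrable (r m v : ℝ) (hv : 0 < v) (hw : 0 < 1 - r + r / v) :
    Integrable (gint r m v) := by
  have h : gint r m v = fun x => (Real.sqrt (2 * Real.pi))⁻¹ *
      Real.exp ((r ^ 2 * m ^ 2 / (v ^ 2 * (1 - r + r / v)) - r * m ^ 2 / v) / 2
        - r / 2 * Real.log v) *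
      Real.exp (-((1 - r + r / v) / 2) * (x - r * m / (v * (1 - r + r / v))) ^ 2) := by
    funext x; exact gint_eq r m v x hv hw
  rw [h]
  apply Integrable.const_mul
  exact (integrable_exp_neg_mul_sq (b := (1 - r + r / v) / 2) (by positivity)).comp_sub_right
    (r * m / (v * (1 - r + r / v)))

lemma gint_integral (r m v : ℝ) (hv : 0 < v) (hw : 0 < 1 - r + r / v) :
    ∫ x, gint r m v x = gval r m v := by
  simp_rw [gint_eq r m v _ hv hw]
  rw [integral_const_mul, integral_sub_right_eq_self
    (fun x => Real.exp (-((1 - r + r / v) / 2) * x ^ 2)), integral_gaussian]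
  unfold gval
  have h1 : Real.pi / ((1 - r + r / v) / 2) = 2 * Real.pi / (1 - r + r / v) := by
    field_simp
  rw [h1, Real.sqrt_div (by positivity)]
  have : Real.sqrt (2 * Real.pi) ≠ 0 := by positivity
  field_simp

lemma gval_zero (m v : ℝ) : gval 0 m v = 1 := by simp [gval]

lemma gval_one (m v : ℝ) (hv : 0 < v) : gval 1 m v = 1 := by
  unfold gval
  have h1 : (1:ℝ) - 1 + 1 / v = v⁻¹ := by ring
  rw [h1]
  have h2 : (1 ^ 2 * m ^ 2 / (v ^ 2 * v⁻¹) - 1 * m ^ 2 / v) / 2 - 1 / 2 * Real.log v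
      = Real.log v * (-(1/2)) := by field_simp; ring
  rw [h2, ← Real.rpow_def_of_pos hv, Real.rpow_neg hv.le, ← Real.sqrt_eq_rpow, Real.sqrt_inv]
  have : Real.sqrt v ≠ 0 := by positivity
  field_simp

lemma gval_half_pow (m v : ℝ) (hv : 0 < v) :
    gval (1/2) m v ^ 4 = 4 * v / (1 + v) ^ 2 * Real.exp (-(m ^ 2 / (1 + v))) := by
  unfold gval
  have h1 : (1:ℝ) - 1/2 + 1/2 / v = (1 + v) / (2 * v) := by field_simp; ring
  rw [h1, div_pow, ← Real.exp_nat_mul]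
  have h2 : ((4:ℕ):ℝ) * (((1/2) ^ 2 * m ^ 2 / (v ^ 2 * ((1 + v) / (2 * v))) - 1/2 * m ^ 2 / v) / 2
     - 1/2 / 2 * Real.log v) = -(m ^ 2 / (1 + v)) - Real.log v := by
    push_cast; field_simp; ring
  rw [h2, Real.exp_sub, Real.exp_log hv]
  have h3 : Real.sqrt ((1 + v) / (2 * v)) ^ 4 = ((1 + v) / (2 * v)) ^ 2 := by
    rw [show (4:ℕ) = 2 * 2 by norm_num, pow_mul, Real.sq_sqrt (by positivity)]
  rw [h3]
  field_simp
  ring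

lemma gval_nonneg (r m v : ℝ) : 0 ≤ gval r m v := by unfold gval; positivity

lemma log_lower (u : ℝ) (hu : |u| ≤ 1/2) : u - u ^ 2 ≤ Real.log (1 + u) := by
  have h := Real.abs_log_sub_add_sum_range_le (x := -u) (by rw [abs_neg]; linarith) 1
  simp only [Finset.sum_range_one, abs_neg] at h
  have h2 : |u| ^ (1 + 1) / (1 - |u|) ≤ 2 * u ^ 2 := by
    rw [div_le_iff₀ (by linarith)]
    have : |u| ^ (1+1) = u ^ 2 := by rw [show (1+1:ℕ)=2 by norm_num, sq_abs]
    rw [this]; nlinarith [sq_nonneg u]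
  have h' : u - u ^ 2 / (2 * (1 - 1/2)) ≤ Real.log (1 + u) := by
    -- convexity based bound
    have hpos : 0 < 1 + u := by have := neg_abs_le u; linarith
    have e : Real.exp (u - u ^ 2) ≤ 1 + u := by
      have hb : Real.exp (-(u - u ^ 2)) ≥ 1 - (u - u^2) + 0 := by
        have := Real.add_one_le_exp (-(u - u ^ 2)); linarith
      have hle := abs_le.1 hu
      rcases le_or_gt 0 u with h0 | h0
      · have q := Real.quadratic_le_exp_of_nonneg (x := u) h0
        have q2 : Real.exp (u - u^2) ≤ 1 / (1 - (u - u^2)) := by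
          rw [le_div_iff₀ (by nlinarith)]
          have : Real.exp (u - u^2) * Real.exp (-(u - u^2)) = 1 := by rw [← Real.exp_add]; simp
          nlinarith [Real.exp_pos (u - u^2)]
        refine q2.trans ?_
        rw [div_le_iff₀ (by nlinarith)]
        nlinarith [mul_nonneg h0 (sq_nonneg u)]
      · have q := Real.quadratic_le_exp_of_nonneg (x := -(u - u^2)) (by nlinarith)
        have : Real.exp (u - u^2) * Real.exp (-(u - u^2)) = 1 := by rw [← Real.exp_add]; simp
        have hA : 1 ≤ (1 + u) * (1 + -(u - u ^ 2) + (-(u - u ^ 2)) ^ 2 / 2) := by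
          have : (1 + u) * (1 + -(u - u ^ 2) + (-(u - u ^ 2)) ^ 2 / 2) - 1
            = u ^ 2 / 2 * (1 + u - u^2 * (1 - u)) := by ring
          have : 0 ≤ 1 + u - u^2 * (1-u) := by nlinarith
          nlinarith [mul_nonneg (sq_nonneg u) this]
        have hB : 1 ≤ (1 + u) * Real.exp (-(u - u^2)) := hA.trans (by gcongr)
        nlinarith [Real.exp_pos (u - u^2)]
    rw [← Real.log_exp (u - u ^ 2 / (2 * (1 - 1/2)))]
    apply Real.log_le_log (Real.exp_pos _)
    convert e using 2; ring
  linarith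

lemma gval_le (r m v : ℝ) (hv : 0 < v) (hv1 : 3/4 ≤ v) (hr : 1 ≤ |r|)
    (hru : |r| * |1 - v| ≤ 1/3) :
    0 < 1 - r + r / v ∧ gval r m v ≤ Real.exp (4 * r ^ 2 * ((v - 1) ^ 2 + m ^ 2)) := by
  set u := 1 / v - 1 with hu
  have hv' := hv.ne'
  have hw : 1 - r + r / v = 1 + r * u := by rw [hu]; ring
  have hu1 : u = (1 - v) / v := by rw [hu]; field_simp
  have hua : |u| ≤ 4/3 * |1 - v| := by
    rw [hu1, abs_div, abs_of_pos hv, div_le_iff₀ hv]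
    nlinarith [abs_nonneg (1 - v)]
  have hrua : |r * u| ≤ 1/2 := by
    rw [abs_mul]; nlinarith [abs_nonneg r]
  have hu2 : |u| ≤ 1/2 := by rw [abs_mul] at hrua; nlinarith [abs_nonneg u]
  have hrb := abs_le.1 hrua
  have hub := abs_le.1 hu2
  have hpos : 0 < 1 + r * u := by linarith
  have husq : u ^ 2 ≤ 2 * (v - 1) ^ 2 := by
    rw [← sq_abs u, ← sq_abs (v - 1), abs_sub_comm v 1]
    nlinarith [abs_nonneg u, abs_nonneg (1 - v)]
  refine ⟨by rw [hw]; exact hpos, ?_⟩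
  unfold gval
  rw [hw]
  have hs : Real.sqrt (1 + r * u) = Real.exp (Real.log (1 + r * u) / 2) := by
    rw [← Real.log_sqrt hpos.le, Real.exp_log (by positivity)]
  rw [hs, ← Real.exp_sub]
  apply Real.exp_le_exp.2
  have hlv : Real.log v = - Real.log (1 + u) := by
    rw [← Real.log_inv]; congr 1; rw [hu]; field_simp; ring
  have l1 := log_lower u hu2
  have l2 := log_lower (r * u) hrua
  have l3 : Real.log (1 + u) ≤ u := by
    have := Real.log_le_sub_one_of_pos (x := 1 + u) (by linarith); linarith
  have hr2 : |r| ≤ r ^ 2 := by rw [← sq_abs]; nlinarith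
  have hlog : r / 2 * Real.log (1 + u) ≤ r * u / 2 + r ^ 2 * u ^ 2 / 2 := by
    rcases le_total 0 r with h0 | h0
    · nlinarith [mul_nonneg (sq_nonneg r) (sq_nonneg u)]
    · rw [abs_of_nonpos h0] at hr2
      have h1 : r * Real.log (1+u) ≤ r * (u - u^2) := mul_le_mul_of_nonpos_left l1 h0
      have h2 : -r * u^2 ≤ r^2 * u^2 := by gcongr
      nlinarith
  have hm : r ^ 2 * m ^ 2 / (v ^ 2 * (1 + r * u)) ≤ 4 * (r ^ 2 * m ^ 2) := by
    rw [div_le_iff₀ (by positivity)]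
    have : 1 ≤ 4 * (v ^ 2 * (1 + r * u)) := by
      have h1 : 9/16 ≤ v ^ 2 := by nlinarith
      nlinarith
    have h0 : 0 ≤ r ^ 2 * m ^ 2 := by positivity
    have h3 := le_mul_of_one_le_right h0 this
    linarith
  have hm2 : - (r * m ^ 2 / v) ≤ 2 * (r ^ 2 * m ^ 2) := by
    rw [← neg_div, div_le_iff₀ hv]
    have h1 : -r ≤ r ^ 2 := (neg_le_abs r).trans hr2
    have h2 : -r * m^2 ≤ r^2 * m^2 := by gcongr
    have h0 : 0 ≤ r ^ 2 * m ^ 2 := by positivity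
    have h3 : r ^ 2 * m ^ 2 ≤ r ^ 2 * m ^ 2 * (2 * v) :=
      le_mul_of_one_le_right h0 (by linarith)
    linarith
  have hru2 : r ^ 2 * u ^ 2 ≤ r ^ 2 * (2 * (v - 1) ^ 2) := by gcongr
  have h00 : 0 ≤ r ^ 2 * m ^ 2 := by positivity
  have h01 : 0 ≤ r ^ 2 * (v-1) ^ 2 := by positivity
  rw [hlv]
  have e1 : (r * u) ^ 2 = r ^ 2 * u ^ 2 := by ring
  rw [e1] at l2
  linarith

/-! ### Packing bound -/

lemma packing_bound {E : Type*} [NormedAddCommGroup E] [NormedSpace ℝ E] [FiniteDimensional ℝ E]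
    (s : Finset E) (R ρ : ℝ) (hR : 0 ≤ R) (hρ : 0 < ρ) (hs : ∀ c ∈ s, ‖c‖ ≤ R)
    (h : ∀ c ∈ s, ∀ d ∈ s, c ≠ d → ρ ≤ ‖c - d‖) :
    (s.card : ℝ) ≤ (1 + 2 * R / ρ) ^ Module.finrank ℝ E := by
  borelize E
  let μ : Measure E := Measure.addHaar
  have δpos : 0 < ρ / 2 := by positivity
  have ρpos : 0 < R + ρ / 2 := by positivity
  set A := ⋃ c ∈ s, Metric.ball (c : E) (ρ / 2) with hA
  have D : Set.Pairwise (s : Set E) (Function.onFun Disjoint fun c => Metric.ball (c : E) (ρ / 2)) := by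
    rintro c hc d hd hcd
    apply Metric.ball_disjoint_ball
    rw [dist_eq_norm]
    have := h c hc d hd hcd
    linarith
  have A_subset : A ⊆ Metric.ball (0 : E) (R + ρ / 2) := by
    refine Set.iUnion₂_subset fun x hx => ?_
    apply Metric.ball_subset_ball'
    rw [dist_zero_right]
    have := hs x hx
    linarith
  have I :
    (s.card : ENNReal) * ENNReal.ofReal ((ρ / 2) ^ Module.finrank ℝ E) * μ (Metric.ball 0 1) ≤
      ENNReal.ofReal ((R + ρ / 2) ^ Module.finrank ℝ E) * μ (Metric.ball 0 1) :=
    calc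
      (s.card : ENNReal) * ENNReal.ofReal ((ρ / 2) ^ Module.finrank ℝ E) * μ (Metric.ball 0 1)
          = μ A := by
        rw [hA, measure_biUnion_finset D fun c _ => measurableSet_ball]
        simp only [μ.addHaar_ball_of_pos _ δpos]
        simp only [Finset.sum_const, nsmul_eq_mul, mul_assoc]
      _ ≤ μ (Metric.ball (0 : E) (R + ρ / 2)) := measure_mono A_subset
      _ = ENNReal.ofReal ((R + ρ / 2) ^ Module.finrank ℝ E) * μ (Metric.ball 0 1) := by
        simp only [μ.addHaar_ball_of_pos _ ρpos]
  have J : (s.card : ENNReal) * ENNReal.ofReal ((ρ / 2) ^ Module.finrank ℝ E) ≤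
      ENNReal.ofReal ((R + ρ / 2) ^ Module.finrank ℝ E) :=
    (ENNReal.mul_le_mul_iff_left (Metric.measure_ball_pos _ _ zero_lt_one).ne'
      measure_ball_lt_top.ne).1 I
  have K := ENNReal.toReal_le_of_le_ofReal (pow_nonneg ρpos.le _) J
  rw [ENNReal.toReal_mul, ENNReal.toReal_natCast,
    ENNReal.toReal_ofReal (pow_nonneg δpos.le _)] at K
  have e : 1 + 2 * R / ρ = (R + ρ / 2) / (ρ / 2) := by field_simp; ring
  rw [e, div_pow, le_div_iff₀ (by positivity)]
  exact K

/-! ### Total variation distance for densities -/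

section tv
variable {X : Type*} [MeasurableSpace X]

lemma tvDist_bdd (μ ν : Measure X) [IsProbabilityMeasure μ] [IsProbabilityMeasure ν] :
    BddAbove (Set.range fun E : {E : Set X // MeasurableSet E} =>
      |(μ E.1).toReal - (ν E.1).toReal|) := by
  refine ⟨1, ?_⟩
  rintro _ ⟨E, rfl⟩
  have h1 : (μ E.1).toReal ≤ 1 := measureReal_le_one (μ := μ)
  have h2 : (ν E.1).toReal ≤ 1 := measureReal_le_one (μ := ν)
  have h3 : 0 ≤ (μ E.1).toReal := ENNReal.toReal_nonneg
  have h4 : 0 ≤ (ν E.1).toReal := ENNReal.toReal_nonneg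
  simp only
  rw [abs_le]; constructor <;> linarith

lemma le_tvDist (μ ν : Measure X) [IsProbabilityMeasure μ] [IsProbabilityMeasure ν]
    (E : Set X) (hE : MeasurableSet E) : |(μ E).toReal - (ν E).toReal| ≤ tvDist μ ν :=
  le_ciSup (tvDist_bdd μ ν) ⟨E, hE⟩

lemma tvDist_le (μ ν : Measure X) (a : ℝ)
    (h : ∀ E, MeasurableSet E → |(μ E).toReal - (ν E).toReal| ≤ a) : tvDist μ ν ≤ a := by
  have : Nonempty {E : Set X // MeasurableSet E} := ⟨⟨∅, MeasurableSet.empty⟩⟩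
  exact ciSup_le fun E => h E.1 E.2

lemma tvDist_comm (μ ν : Measure X) : tvDist μ ν = tvDist ν μ := by
  unfold tvDist
  simp_rw [abs_sub_comm]

lemma tvDist_self (μ : Measure X) : tvDist μ μ = 0 := by
  have : Nonempty {E : Set X // MeasurableSet E} := ⟨⟨∅, MeasurableSet.empty⟩⟩
  simp [tvDist]

lemma tvDist_map {Y : Type*} [MeasurableSpace Y] (μ ν : Measure X) (e : X ≃ᵐ Y) :
    tvDist (μ.map e) (ν.map e) = tvDist μ ν := by
  unfold tvDist
  refine Function.Surjective.iSup_congr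
    (fun E : {E : Set Y // MeasurableSet E} =>
      (⟨e ⁻¹' E.1, e.measurable E.2⟩ : {E : Set X // MeasurableSet E})) ?_ ?_
  · rintro ⟨F, hF⟩
    refine ⟨⟨e.symm ⁻¹' F, e.symm.measurable hF⟩, ?_⟩
    apply Subtype.ext
    simp [← Set.preimage_comp]
  · rintro ⟨E, hE⟩
    simp [Measure.map_apply e.measurable hE]

lemma density_apply (μ : Measure X) (p : X → ℝ) (hp : Integrable p μ) (hp0 : ∀ x, 0 ≤ p x)
    (E : Set X) (hE : MeasurableSet E) :
    ((μ.withDensity fun x => ENNReal.ofReal (p x)) E).toReal = ∫ x in E, p x ∂μ := by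
  rw [withDensity_apply _ hE, ← ofReal_integral_eq_lintegral_ofReal hp.integrableOn
    (Filter.Eventually.of_forall hp0), ENNReal.toReal_ofReal]
  exact integral_nonneg hp0

lemma density_prob (μ : Measure X) (p : X → ℝ) (hp : Integrable p μ) (hp0 : ∀ x, 0 ≤ p x)
    (hp1 : ∫ x, p x ∂μ = 1) :
    IsProbabilityMeasure (μ.withDensity fun x => ENNReal.ofReal (p x)) := by
  constructor
  rw [withDensity_apply _ MeasurableSet.univ, Measure.restrict_univ,
    ← ofReal_integral_eq_lintegral_ofReal hp (Filter.Eventually.of_forall hp0), hp1]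
  simp

lemma tvDist_le_integral (μ : Measure X) (p q : X → ℝ) (hp : Integrable p μ) (hq : Integrable q μ)
    (hp0 : ∀ x, 0 ≤ p x) (hq0 : ∀ x, 0 ≤ q x) :
    tvDist (μ.withDensity fun x => ENNReal.ofReal (p x))
      (μ.withDensity fun x => ENNReal.ofReal (q x)) ≤ ∫ x, |p x - q x| ∂μ := by
  apply tvDist_le
  intro E hE
  rw [density_apply μ p hp hp0 E hE, density_apply μ q hq hq0 E hE,
    ← integral_sub hp.integrableOn hq.integrableOn]
  refine (abs_integral_le_integral_abs).trans ?_
  exact setIntegral_le_integral (hp.sub hq).abs (Filter.Eventually.of_forall fun x => abs_nonneg _)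

lemma integral_le_tvDist (μ : Measure X) (p q : X → ℝ) (hp : Integrable p μ) (hq : Integrable q μ)
    (mp : Measurable p) (mq : Measurable q)
    (hp0 : ∀ x, 0 ≤ p x) (hq0 : ∀ x, 0 ≤ q x) (hp1 : ∫ x, p x ∂μ = 1) (hq1 : ∫ x, q x ∂μ = 1) :
    ∫ x, |p x - q x| ∂μ ≤ 2 * tvDist (μ.withDensity fun x => ENNReal.ofReal (p x))
      (μ.withDensity fun x => ENNReal.ofReal (q x)) := by
  have := density_prob μ p hp hp0 hp1
  have := density_prob μ q hq hq0 hq1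
  have hE : MeasurableSet {x | q x ≤ p x} := measurableSet_le mq mp
  have h1 := le_tvDist (μ.withDensity fun x => ENNReal.ofReal (p x))
      (μ.withDensity fun x => ENNReal.ofReal (q x)) _ hE
  have h2 := le_tvDist (μ.withDensity fun x => ENNReal.ofReal (p x))
      (μ.withDensity fun x => ENNReal.ofReal (q x)) _ hE.compl
  rw [density_apply μ p hp hp0 _ hE, density_apply μ q hq hq0 _ hE,
    ← integral_sub hp.integrableOn hq.integrableOn] at h1
  rw [density_apply μ p hp hp0 _ hE.compl, density_apply μ q hq hq0 _ hE.compl,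
    ← integral_sub hp.integrableOn hq.integrableOn] at h2
  have hab : Integrable (fun x => |p x - q x|) μ := (hp.sub hq).abs
  rw [← integral_add_compl hE hab]
  have e1 : ∫ x in {x | q x ≤ p x}, |p x - q x| ∂μ = ∫ x in {x | q x ≤ p x}, (p x - q x) ∂μ :=
    setIntegral_congr_fun hE fun x hx => abs_of_nonneg (sub_nonneg.2 hx)
  have e2 : ∫ x in {x | q x ≤ p x}ᶜ, |p x - q x| ∂μ
      = ∫ x in {x | q x ≤ p x}ᶜ, -(p x - q x) ∂μ :=
    setIntegral_congr_fun hE.compl fun x hx =>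
      abs_of_nonpos (sub_nonpos.2 (le_of_not_ge (fun h => hx h)))
  rw [e1, e2, integral_neg]
  have := le_abs_self (∫ x in {x | q x ≤ p x}, (p x - q x) ∂μ)
  have := neg_abs_le (∫ x in {x | q x ≤ p x}ᶜ, (p x - q x) ∂μ)
  linarith

end tv

/-! ### Product densities -/

/-- The product of the interpolated densities. -/
noncomputable def gpd (d : ℕ) (r : ℝ) (m v : Fin d → ℝ) (x : Fin d → ℝ) : ℝ :=
  ∏ i, gint r (m i) (v i) (x i)

/-- The log likelihood ratio. -/
noncomputable def gllr (d : ℕ) (m v : Fin d → ℝ) (x : Fin d → ℝ) : ℝ :=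
  ∑ i, ((x i) ^ 2 / 2 - Real.log (v i) / 2 - (x i - m i) ^ 2 / (2 * v i))

lemma gint_zero_mul (r m v x : ℝ) : gint r m v x =
    gint 0 m v x * Real.exp (r * (x ^ 2 / 2 - Real.log v / 2 - (x - m) ^ 2 / (2 * v))) := by
  unfold gint
  rw [mul_assoc, ← Real.exp_add]
  congr 2
  ring

lemma gpd_eq (d : ℕ) (r : ℝ) (m v x : Fin d → ℝ) :
    gpd d r m v x = gpd d 0 m v x * Real.exp (r * gllr d m v x) := by
  unfold gpd gllr
  rw [Finset.mul_sum, Real.exp_sum, ← Finset.prod_mul_distrib]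
  exact Finset.prod_congr rfl fun i _ => gint_zero_mul _ _ _ _

lemma gpd_nonneg (d : ℕ) (r : ℝ) (m v x : Fin d → ℝ) : 0 ≤ gpd d r m v x := by
  unfold gpd gint; positivity

lemma gpd_measurable (d : ℕ) (r : ℝ) (m v : Fin d → ℝ) : Measurable (gpd d r m v) := by
  unfold gpd gint; fun_prop

lemma gpd_integrable (d : ℕ) (r : ℝ) (m v : Fin d → ℝ) (hv : ∀ i, 0 < v i)
    (hw : ∀ i, 0 < 1 - r + r / v i) : Integrable (gpd d r m v) :=
  Integrable.fintype_prod (f := fun i => gint r (m i) (v i)) (μ := fun _ => volume)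
    fun i => gint_integrable r (m i) (v i) (hv i) (hw i)

lemma gpd_integral (d : ℕ) (r : ℝ) (m v : Fin d → ℝ) (hv : ∀ i, 0 < v i)
    (hw : ∀ i, 0 < 1 - r + r / v i) : ∫ x, gpd d r m v x = ∏ i, gval r (m i) (v i) := by
  unfold gpd
  rw [integral_fintype_prod_volume_eq_prod (fun i => gint r (m i) (v i))]
  exact Finset.prod_congr rfl fun i _ => gint_integral r (m i) (v i) (hv i) (hw i)

lemma gpd_int01 (d : ℕ) (m v : Fin d → ℝ) (hv : ∀ i, 0 < v i) :
    (Integrable (gpd d 0 m v) ∧ ∫ x, gpd d 0 m v x = 1) ∧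
    (Integrable (gpd d 1 m v) ∧ ∫ x, gpd d 1 m v x = 1) ∧
    Integrable (gpd d (1/2) m v) := by
  have h0 : ∀ i, 0 < 1 - (0:ℝ) + 0 / v i := fun i => by norm_num
  have h1 : ∀ i, 0 < 1 - (1:ℝ) + 1 / v i := fun i => by have := hv i; simp [this]
  have h2 : ∀ i, 0 < 1 - (1/2:ℝ) + (1/2) / v i := fun i => by
    have := hv i
    have : 0 < (1/2) / v i := by positivity
    linarith
  refine ⟨⟨gpd_integrable d 0 m v hv h0, ?_⟩, ⟨gpd_integrable d 1 m v hv h1, ?_⟩,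
    gpd_integrable d (1/2) m v hv h2⟩
  · rw [gpd_integral d 0 m v hv h0]; simp [gval_zero]
  · rw [gpd_integral d 1 m v hv h1]
    exact Finset.prod_eq_one fun i _ => gval_one _ _ (hv i)

/-- The Hellinger affinity. -/
noncomputable def aff (d : ℕ) (m v : Fin d → ℝ) : ℝ := ∫ x, gpd d (1/2) m v x

/-- The gaussian with parameters `m`, `diag v`. -/
noncomputable def gm (d : ℕ) (r : ℝ) (m v : Fin d → ℝ) : Measure (Fin d → ℝ) :=
  volume.withDensity fun x => ENNReal.ofReal (gpd d r m v x)

lemma gpd_half_sq (d : ℕ) (m v x : Fin d → ℝ) :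
    gpd d (1/2) m v x = gpd d 0 m v x * Real.exp (gllr d m v x / 2) ∧
    gpd d 1 m v x = gpd d 0 m v x * Real.exp (gllr d m v x / 2) ^ 2 := by
  constructor
  · rw [gpd_eq d (1/2)]; congr 2; ring
  · rw [gpd_eq d 1, ← Real.exp_nat_mul]; congr 2; push_cast; ring

lemma aff_le_one (d : ℕ) (m v : Fin d → ℝ) (hv : ∀ i, 0 < v i) : aff d m v ≤ 1 := by
  obtain ⟨⟨i0, e0⟩, ⟨i1, e1⟩, ih⟩ := gpd_int01 d m v hv
  have h : ∫ x, gpd d (1/2) m v x ≤ ∫ x, (gpd d 0 m v x + gpd d 1 m v x) / 2 := by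
    apply integral_mono ih ((i0.add i1).div_const 2)
    intro x
    obtain ⟨a, b⟩ := gpd_half_sq d m v x
    simp only [a, b, Pi.add_apply]
    have := gpd_nonneg d 0 m v x
    nlinarith [mul_nonneg this (sq_nonneg (Real.exp (gllr d m v x / 2) - 1))]
  rw [integral_div, integral_add i0 i1, e0, e1] at h
  unfold aff; linarith

lemma tv_upper_aff (d : ℕ) (m v : Fin d → ℝ) (hv : ∀ i, 0 < v i) (δ : ℝ) (hδ : 0 < δ)
    (h : 1 - aff d m v ≤ δ ^ 2) : tvDist (gm d 0 m v) (gm d 1 m v) ≤ 3 * δ := by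
  obtain ⟨⟨i0, e0⟩, ⟨i1, e1⟩, ih⟩ := gpd_int01 d m v hv
  refine (tvDist_le_integral volume _ _ i0 i1 (gpd_nonneg d 0 m v) (gpd_nonneg d 1 m v)).trans ?_
  have hle : ∫ x, |gpd d 0 m v x - gpd d 1 m v x| ≤
      ∫ x, ((1/δ/2 + δ/2) * gpd d 0 m v x + (1/δ/2 + δ/2) * gpd d 1 m v x
        + (δ - 1/δ) * gpd d (1/2) m v x) := by
    apply integral_mono (i0.sub i1).abs
      (((i0.const_mul _).add (i1.const_mul _)).add (ih.const_mul _))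
    intro x
    obtain ⟨a, b⟩ := gpd_half_sq d m v x
    simp only [a, b, Pi.sub_apply, Pi.add_apply]
    have hp := gpd_nonneg d 0 m v x
    set p := gpd d 0 m v x
    set e := Real.exp (gllr d m v x / 2) with he
    have hd : δ * (1/δ) = 1 := by field_simp
    set c := 1/δ
    have hc : 0 < c := by positivity
    have key : |1 - e ^ 2| ≤ (c/2 + δ/2) + (c/2+δ/2) * e ^ 2 + (δ - c) * e := by
      have : (c/2 + δ/2) + (c/2+δ/2) * e ^ 2 + (δ - c) * e
        = c/2 * (1-e)^2 + δ/2 * (1+e)^2 := by ring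
      rw [this, abs_le]
      have k1 : c * δ * ((c * (1 - e) - (1 + e)) ^ 2) ≥ 0 := by positivity
      have k2 : c * δ * ((c * (1 - e) + (1 + e)) ^ 2) ≥ 0 := by positivity
      have k3 : δ * ((c * (1 - e) - (1 + e)) ^ 2) = c * (1-e)^2 + δ * (1+e)^2
        - 2 * (1 - e^2) := by linear_combination (c * (1-e)^2 - 2*(1-e^2)) * hd
      have k4 : δ * ((c * (1 - e) + (1 + e)) ^ 2) = c * (1-e)^2 + δ * (1+e)^2
        + 2 * (1 - e^2) := by linear_combination (c * (1-e)^2 + 2*(1-e^2)) * hd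
      have k5 : 0 ≤ δ * ((c * (1 - e) - (1 + e)) ^ 2) := by positivity
      have k6 : 0 ≤ δ * ((c * (1 - e) + (1 + e)) ^ 2) := by positivity
      constructor <;> linarith
    have e3 : |p - p * e ^ 2| = p * |1 - e ^ 2| := by
      rw [show p - p * e ^ 2 = p * (1 - e ^ 2) by ring, abs_mul, abs_of_nonneg hp]
    rw [e3]
    have := mul_le_mul_of_nonneg_left key hp
    linarith
  refine hle.trans ?_
  have i2 : Integrable (fun x => (1/δ/2 + δ/2) * gpd d 0 m v x + (1/δ/2 + δ/2) * gpd d 1 m v x) :=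
    (i0.const_mul _).add (i1.const_mul _)
  rw [integral_add i2 (ih.const_mul _), integral_add (i0.const_mul _) (i1.const_mul _),
    integral_const_mul, integral_const_mul, integral_const_mul, e0, e1]
  have hA := aff_le_one d m v hv
  change _ + _ * aff d m v ≤ _
  have : 1/δ * (1 - aff d m v) ≤ δ := by
    rw [one_div, inv_mul_le_iff₀ hδ]; nlinarith
  nlinarith

lemma aff_ge (d : ℕ) (m v : Fin d → ℝ) (hv : ∀ i, 0 < v i) :
    1 - aff d m v ≤ tvDist (gm d 0 m v) (gm d 1 m v) := by
  obtain ⟨⟨i0, e0⟩, ⟨i1, e1⟩, ih⟩ := gpd_int01 d m v hv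
  have h := integral_le_tvDist volume _ _ i0 i1 (gpd_measurable d 0 m v) (gpd_measurable d 1 m v)
    (gpd_nonneg d 0 m v) (gpd_nonneg d 1 m v) e0 e1
  have hle : ∫ x, (gpd d 0 m v x + gpd d 1 m v x - 2 * gpd d (1/2) m v x) ≤
      ∫ x, |gpd d 0 m v x - gpd d 1 m v x| := by
    apply integral_mono ((i0.add i1).sub (ih.const_mul _)) (i0.sub i1).abs
    intro x
    obtain ⟨a, b⟩ := gpd_half_sq d m v x
    simp only [a, b, Pi.sub_apply, Pi.add_apply]
    have hp := gpd_nonneg d 0 m v x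
    set p := gpd d 0 m v x
    have he := Real.exp_pos (gllr d m v x / 2)
    set e := Real.exp (gllr d m v x / 2)
    rcases le_total e 1 with h1 | h1
    · refine le_trans ?_ (le_abs_self _)
      have := mul_nonneg hp (mul_nonneg he.le (sub_nonneg.2 h1)); nlinarith
    · refine le_trans ?_ (neg_le_abs _)
      have := mul_nonneg hp (sub_nonneg.2 h1); nlinarith
  have i2 : Integrable (fun x => gpd d 0 m v x + gpd d 1 m v x) := i0.add i1
  rw [integral_sub i2 (ih.const_mul _), integral_add i0 i1, integral_const_mul, e0, e1] at hle
  change _ - 2 * aff d m v ≤ _ at hle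
  unfold gm
  linarith

lemma exp_sub_one_pow (z δ : ℝ) (hδ : 0 < δ) (hδ1 : δ ≤ 1) :
    (Real.exp z - 1) ^ 4 ≤ δ ^ 4 * (Real.exp (4 * z / δ) + Real.exp (-(4 * z / δ))) := by
  have e1 : Real.exp (4 * z / δ) = Real.exp (z / δ) ^ 4 := by
    rw [← Real.exp_nat_mul]; congr 1; push_cast; ring
  have e2 : Real.exp (-(4 * z / δ)) = Real.exp (-z / δ) ^ 4 := by
    rw [← Real.exp_nat_mul]; congr 1; push_cast; ring
  rw [e1, e2, mul_add, ← mul_pow, ← mul_pow]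
  have p1 : 0 ≤ (δ * Real.exp (z / δ)) ^ 4 := by positivity
  have p2 : 0 ≤ (δ * Real.exp (-z / δ)) ^ 4 := by positivity
  rcases le_total 0 z with h | h
  · have : Real.exp z - 1 ≤ δ * Real.exp (z / δ) := by
      have b := one_add_mul_self_le_rpow_one_add (s := Real.exp z - 1) (p := 1/δ)
        (by linarith [Real.exp_pos z]) (by rw [le_div_iff₀ hδ]; linarith)
      have c : (1 + (Real.exp z - 1)) ^ (1/δ) = Real.exp (z / δ) := by
        rw [show 1 + (Real.exp z - 1) = Real.exp z by ring, ← Real.exp_mul]; congr 1; ring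
      rw [c] at b
      have := mul_le_mul_of_nonneg_left b hδ.le
      have e : δ * (1 + 1 / δ * (Real.exp z - 1)) = δ + (Real.exp z - 1) := by field_simp
      linarith
    have h0 : 0 ≤ Real.exp z - 1 := by linarith [Real.add_one_le_exp z]
    have := pow_le_pow_left₀ h0 this 4
    linarith
  · have : 1 - Real.exp z ≤ δ * Real.exp (-z / δ) := by
      have b := Real.add_one_le_exp (-z / δ)
      have := mul_le_mul_of_nonneg_left b hδ.le
      have e : δ * (-z / δ + 1) = -z + δ := by field_simp
      linarith [Real.add_one_le_exp z]
    have h0 : 0 ≤ 1 - Real.exp z := by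
      have := Real.exp_le_one_iff.2 h; linarith
    have := pow_le_pow_left₀ h0 this 4
    have e : (1 - Real.exp z) ^ 4 = (Real.exp z - 1) ^ 4 := by ring
    linarith

lemma tv_lower_moment (d : ℕ) (m v : Fin d → ℝ) (hv : ∀ i, 0 < v i) (δ t : ℝ) (hδ : 0 < δ)
    (hδ1 : δ ≤ 1) (ht : 0 < t) (hw1 : ∀ i, 0 < 1 - (2 / δ) + (2 / δ) / v i)
    (hw2 : ∀ i, 0 < 1 - (-(2 / δ)) + (-(2 / δ)) / v i) :
    2 * (1 - aff d m v) / t - δ ^ 4 / t ^ 3 *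
      (∏ i, gval (2 / δ) (m i) (v i) + ∏ i, gval (-(2 / δ)) (m i) (v i)) ≤
      2 * tvDist (gm d 0 m v) (gm d 1 m v) := by
  obtain ⟨⟨i0, e0⟩, ⟨i1, e1⟩, ih⟩ := gpd_int01 d m v hv
  have h := integral_le_tvDist volume _ _ i0 i1 (gpd_measurable d 0 m v) (gpd_measurable d 1 m v)
    (gpd_nonneg d 0 m v) (gpd_nonneg d 1 m v) e0 e1
  have ia := gpd_integrable d _ m v hv hw1
  have ib := gpd_integrable d _ m v hv hw2
  have i2 : Integrable (fun x => gpd d 0 m v x + gpd d 1 m v x) := i0.add i1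
  have i3 : Integrable (fun x => gpd d 0 m v x + gpd d 1 m v x - 2 * gpd d (1/2) m v x) :=
    i2.sub (ih.const_mul _)
  have i4 : Integrable (fun x => gpd d (2/δ) m v x + gpd d (-(2/δ)) m v x) := ia.add ib
  have hle : ∫ x, ((1/t) * (gpd d 0 m v x + gpd d 1 m v x - 2 * gpd d (1/2) m v x)
        - (δ ^ 4 / t ^ 3) * (gpd d (2/δ) m v x + gpd d (-(2/δ)) m v x)) ≤
      ∫ x, |gpd d 0 m v x - gpd d 1 m v x| := by
    apply integral_mono ((i3.const_mul _).sub (i4.const_mul _)) (i0.sub i1).abs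
    intro x
    obtain ⟨a, b⟩ := gpd_half_sq d m v x
    simp only [a, b, Pi.sub_apply, Pi.add_apply]
    rw [gpd_eq d (2/δ), gpd_eq d (-(2/δ))]
    have hp := gpd_nonneg d 0 m v x
    set p := gpd d 0 m v x
    have he := Real.exp_pos (gllr d m v x / 2)
    have h4 := exp_sub_one_pow (gllr d m v x / 2) δ hδ hδ1
    rw [show 4 * (gllr d m v x / 2) / δ = 2 / δ * gllr d m v x by ring,
      ← neg_mul] at h4
    set e := Real.exp (gllr d m v x / 2)
    set W := Real.exp (2 / δ * gllr d m v x) + Real.exp (-(2 / δ) * gllr d m v x) with hW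
    have e3 : |p - p * e ^ 2| = p * |1 - e ^ 2| := by
      rw [show p - p * e ^ 2 = p * (1 - e ^ 2) by ring, abs_mul, abs_of_nonneg hp]
    rw [e3]
    have k1 : |e - 1| ≤ |1 - e ^ 2| := by
      rw [show 1 - e ^ 2 = -((e - 1) * (e + 1)) by ring, abs_neg, abs_mul]
      apply le_mul_of_one_le_right (abs_nonneg _)
      rw [abs_of_pos (by linarith)]; linarith
    have k2 : (e - 1) ^ 2 / t - (e - 1) ^ 4 / t ^ 3 ≤ |e - 1| := by
      have hs : (e - 1) ^ 2 = |e - 1| ^ 2 := (sq_abs _).symm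
      have hs4 : (e - 1) ^ 4 = |e - 1| ^ 4 := by
        rw [show (4:ℕ) = 2 * 2 by norm_num, pow_mul, pow_mul, hs]
      rw [hs, hs4]
      have ha := abs_nonneg (e - 1)
      set y := |e - 1|
      rcases le_total y t with hyt | hyt
      · have : y ^ 2 / t ≤ y := by rw [div_le_iff₀ ht]; nlinarith
        have : 0 ≤ y ^ 4 / t ^ 3 := by positivity
        linarith
      · have : y ^ 2 / t ≤ y ^ 4 / t ^ 3 := by
          rw [div_le_div_iff₀ ht (by positivity)]
          have : t ^ 2 ≤ y ^ 2 := pow_le_pow_left₀ ht.le hyt 2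
          have := mul_le_mul_of_nonneg_left this (by positivity : 0 ≤ y ^ 2 * t)
          nlinarith
        linarith
    have k3 : (e - 1) ^ 4 / t ^ 3 ≤ δ ^ 4 / t ^ 3 * W := by
      rw [div_mul_eq_mul_div]; gcongr
    have k4 : (e - 1) ^ 2 / t - δ ^ 4 / t ^ 3 * W ≤ |1 - e ^ 2| := by linarith
    have := mul_le_mul_of_nonneg_left k4 hp
    refine le_trans (le_of_eq ?_) this
    rw [hW]; ring
  rw [integral_sub (i3.const_mul _) (i4.const_mul _), integral_const_mul, integral_const_mul,
    integral_sub i2 (ih.const_mul _), integral_add i0 i1, integral_const_mul, e0, e1,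
    integral_add ia ib, gpd_integral d _ m v hv hw1, gpd_integral d _ m v hv hw2] at hle
  change 1/t * (1 + 1 - 2 * aff d m v) - _ ≤ _ at hle
  unfold gm
  have : 2 * (1 - aff d m v) / t = 1/t * (1 + 1 - 2 * aff d m v) := by ring
  linarith

/-! ### Bounds in the diagonal case -/

lemma one_sub_prod_le {ι : Type*} (s : Finset ι) (a : ι → ℝ) (h0 : ∀ i ∈ s, 0 ≤ a i)
    (h1 : ∀ i ∈ s, a i ≤ 1) : 1 - ∏ i ∈ s, a i ≤ ∑ i ∈ s, (1 - a i) := by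
  classical
  induction s using Finset.induction_on with
  | empty => simp
  | insert j s hj ih =>
    rw [Finset.prod_insert hj, Finset.sum_insert hj]
    have ih' := ih (fun i hi => h0 i (Finset.mem_insert_of_mem hi))
      (fun i hi => h1 i (Finset.mem_insert_of_mem hi))
    have p1 : ∏ i ∈ s, a i ≤ 1 := Finset.prod_le_one
      (fun i hi => h0 i (Finset.mem_insert_of_mem hi))
      (fun i hi => h1 i (Finset.mem_insert_of_mem hi))
    have a0 := h0 j (Finset.mem_insert_self j s)
    have a1 := h1 j (Finset.mem_insert_self j s)
    nlinarith

/-- The fourth power of the one-dimensional affinity. -/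
noncomputable def wval (m v : ℝ) : ℝ := 4 * v / (1 + v) ^ 2 * Real.exp (-(m ^ 2 / (1 + v)))

lemma wval_eq (m v : ℝ) (hv : 0 < v) :
    wval m v = (1 - ((1 - v) / (1 + v)) ^ 2) * Real.exp (-(m ^ 2 / (1 + v))) := by
  unfold wval; congr 1; field_simp; ring

lemma wval_nonneg (m v : ℝ) (hv : 0 < v) : 0 ≤ wval m v := by unfold wval; positivity

lemma wval_le (m v : ℝ) (hv : 0 < v) : wval m v ≤ 1 - ((1 - v) / (1 + v)) ^ 2 := by
  rw [wval_eq m v hv]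
  have h1 : 0 ≤ 1 - ((1 - v) / (1 + v)) ^ 2 := by
    have : 1 - ((1 - v) / (1 + v)) ^ 2 = 4 * v / (1 + v) ^ 2 := by field_simp; ring
    rw [this]; positivity
  apply mul_le_of_le_one_right h1
  apply Real.exp_le_one_iff.2
  have : 0 ≤ m ^ 2 / (1 + v) := by positivity
  linarith

lemma wval_ge (m v : ℝ) (hv : 0 < v) : 1 - wval m v ≤ (v - 1) ^ 2 + m ^ 2 := by
  rw [wval_eq m v hv]
  have hx : ((1 - v) / (1 + v)) ^ 2 ≤ (v - 1) ^ 2 := by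
    rw [div_pow, div_le_iff₀ (by positivity)]
    nlinarith [mul_nonneg (sq_nonneg (v - 1)) (by positivity : 0 ≤ 2 * v + v ^ 2)]
  have hx0 : 0 ≤ ((1 - v) / (1 + v)) ^ 2 := by positivity
  have hy := Real.add_one_le_exp (-(m ^ 2 / (1 + v)))
  have hy1 : m ^ 2 / (1 + v) ≤ m ^ 2 := div_le_self (by positivity) (by linarith)
  have hy2 : Real.exp (-(m ^ 2 / (1 + v))) ≤ 1 := by
    apply Real.exp_le_one_iff.2
    have : 0 ≤ m ^ 2 / (1 + v) := by positivity
    linarith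
  nlinarith

lemma gval_half_le_one (m v : ℝ) (hv : 0 < v) : gval (1/2) m v ≤ 1 := by
  have h := gval_half_pow m v hv
  have h1 : gval (1/2) m v ^ 4 ≤ 1 := by
    rw [h]; change wval m v ≤ 1
    have := wval_le m v hv
    have : 0 ≤ ((1 - v) / (1 + v)) ^ 2 := by positivity
    linarith
  exact (pow_le_one_iff_of_nonneg (gval_nonneg _ _ _) (by norm_num)).1 h1

lemma aff_eq (d : ℕ) (m v : Fin d → ℝ) (hv : ∀ i, 0 < v i) :
    aff d m v = ∏ i, gval (1/2) (m i) (v i) := by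
  apply gpd_integral d _ m v hv
  intro i
  have := hv i
  have : 0 < (1/2) / v i := by positivity
  linarith

lemma aff_pow (d : ℕ) (m v : Fin d → ℝ) (hv : ∀ i, 0 < v i) :
    aff d m v ^ 4 = ∏ i, wval (m i) (v i) := by
  rw [aff_eq d m v hv, ← Finset.prod_pow]
  exact Finset.prod_congr rfl fun i _ => gval_half_pow _ _ (hv i)

lemma aff_upper (d : ℕ) (m v : Fin d → ℝ) (hv : ∀ i, 0 < v i) :
    1 - aff d m v ≤ ∑ i, ((v i - 1) ^ 2 + m i ^ 2) := by
  rw [aff_eq d m v hv]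
  refine (one_sub_prod_le _ _ (fun i _ => gval_nonneg _ _ _)
    (fun i _ => gval_half_le_one _ _ (hv i))).trans ?_
  apply Finset.sum_le_sum
  intro i _
  refine le_trans ?_ (wval_ge (m i) (v i) (hv i))
  have h : gval (1/2) (m i) (v i) ^ 4 = wval (m i) (v i) := gval_half_pow _ _ (hv i)
  rw [← h]
  have := pow_le_of_le_one (gval_nonneg (1/2) (m i) (v i)) (gval_half_le_one _ _ (hv i))
    (n := 4) (by norm_num)
  linarith

lemma aff_lower (d : ℕ) (m v : Fin d → ℝ) (hv : ∀ i, 0 < v i) (h : 299/300 ≤ aff d m v) :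
    (∀ i, 3/4 ≤ v i) ∧ ∑ i, ((v i - 1) ^ 2 + m i ^ 2) ≤ 1/10 ∧
      aff d m v ≤ Real.exp (-(∑ i, ((v i - 1) ^ 2 + m i ^ 2)) / 24) := by
  have hp : 74/75 ≤ ∏ i, wval (m i) (v i) := by
    rw [← aff_pow d m v hv]
    refine le_trans ?_ (pow_le_pow_left₀ (by norm_num) h 4)
    norm_num
  have hw1 : ∀ i, wval (m i) (v i) ≤ 1 := fun i => by
    have := wval_le (m i) (v i) (hv i)
    have : 0 ≤ ((1 - v i) / (1 + v i)) ^ 2 := by positivity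
    linarith
  have hwi : ∀ i, 74/75 ≤ wval (m i) (v i) := by
    intro i
    refine hp.trans ?_
    rw [← Finset.mul_prod_erase Finset.univ _ (Finset.mem_univ i)]
    exact mul_le_of_le_one_right (wval_nonneg _ _ (hv i))
      (Finset.prod_le_one (fun j _ => wval_nonneg _ _ (hv j)) (fun j _ => hw1 j))
  have hz : ∀ i, (1 - v i) ^ 2 ≤ 1/75 * (1 + v i) ^ 2 := by
    intro i
    have h1 := hv i
    have := (hwi i).trans (wval_le (m i) (v i) (hv i))
    have h2 : ((1 - v i) / (1 + v i)) ^ 2 ≤ 1/75 := by linarith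
    rwa [div_pow, div_le_iff₀ (by positivity)] at h2
  have hv1 : ∀ i, 3/4 ≤ v i := fun i => by
    have := hz i; have := hv i
    by_contra hc
    push Not at hc
    nlinarith
  have hv2 : ∀ i, v i ≤ 4/3 := fun i => by
    have := hz i; have := hv i
    by_contra hc
    push Not at hc
    nlinarith
  have hwe : ∀ i, wval (m i) (v i) ≤ Real.exp (-((v i - 1) ^ 2 + m i ^ 2) / 6) := by
    intro i
    have h0 := hv i
    rw [wval_eq _ _ h0]
    have e1 := Real.add_one_le_exp (-((1 - v i) / (1 + v i)) ^ 2)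
    have e2 : (1 - ((1 - v i) / (1 + v i)) ^ 2) * Real.exp (-(m i ^ 2 / (1 + v i)))
      ≤ Real.exp (-(((1 - v i) / (1 + v i)) ^ 2)) * Real.exp (-(m i ^ 2 / (1 + v i))) := by
      gcongr
      have := Real.add_one_le_exp (-(((1 - v i) / (1 + v i)) ^ 2))
      linarith
    refine e2.trans ?_
    rw [← Real.exp_add]
    apply Real.exp_le_exp.2
    have a1 : (v i - 1) ^ 2 / 6 ≤ ((1 - v i) / (1 + v i)) ^ 2 := by
      rw [div_pow, div_le_div_iff₀ (by norm_num) (by positivity)]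
      have : (1 + v i) ^ 2 ≤ 6 := by nlinarith [hv2 i]
      nlinarith [mul_le_mul_of_nonneg_left this (sq_nonneg (v i - 1))]
    have a2 : m i ^ 2 / 6 ≤ m i ^ 2 / (1 + v i) := by
      have := hv2 i
      gcongr; linarith
    linarith
  have hprod : ∏ i, wval (m i) (v i) ≤ Real.exp (-(∑ i, ((v i - 1) ^ 2 + m i ^ 2)) / 6) := by
    have : -(∑ i, ((v i - 1) ^ 2 + m i ^ 2)) / 6 = ∑ i, (-((v i - 1) ^ 2 + m i ^ 2) / 6) := by
      rw [← Finset.sum_div, Finset.sum_neg_distrib]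
    rw [this, Real.exp_sum]
    exact Finset.prod_le_prod (fun j _ => wval_nonneg _ _ (hv j)) (fun j _ => hwe j)
  set N := ∑ i, ((v i - 1) ^ 2 + m i ^ 2) with hN
  refine ⟨hv1, ?_, ?_⟩
  · have h1 : 74/75 ≤ Real.exp (-N/6) := hp.trans hprod
    have h2 := Real.add_one_le_exp (N/6)
    have h3 : Real.exp (N/6) * Real.exp (-N/6) = 1 := by
      rw [← Real.exp_add]; ring_nf; simp
    have h4 : Real.exp (N/6) * (74/75) ≤ 1 := by
      rw [← h3]; gcongr
    linarith
  · have h4 : aff d m v ^ 4 ≤ Real.exp (-N/24) ^ 4 := by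
      rw [aff_pow d m v hv, ← Real.exp_nat_mul]
      refine hprod.trans (le_of_eq ?_)
      congr 1; push_cast; ring
    exact (pow_le_pow_iff_left₀ (by linarith) (Real.exp_pos _).le (by norm_num)).1 h4

lemma tv_lower_diag (d : ℕ) (m v : Fin d → ℝ) (hv : ∀ i, 0 < v i)
    (h : tvDist (gm d 0 m v) (gm d 1 m v) ≤ 1/300) :
    ∑ i, ((v i - 1) ^ 2 + m i ^ 2) ≤ (50000 * tvDist (gm d 0 m v) (gm d 1 m v)) ^ 2 ∧
    ∑ i, ((v i - 1) ^ 2 + m i ^ 2) ≤ 1/10 := by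
  have hA := aff_ge d m v hv
  obtain ⟨hv1, hN1, haff⟩ := aff_lower d m v hv (by linarith)
  refine ⟨?_, hN1⟩
  have hN0 : 0 ≤ ∑ i, ((v i - 1) ^ 2 + m i ^ 2) := by positivity
  have hi : ∀ i, (v i - 1) ^ 2 ≤ ∑ i, ((v i - 1) ^ 2 + m i ^ 2) := fun i => by
    have := Finset.single_le_sum (f := fun i => (v i - 1) ^ 2 + m i ^ 2)
      (fun j _ => by positivity) (Finset.mem_univ i)
    nlinarith [sq_nonneg (m i)]
  set N := ∑ i, ((v i - 1) ^ 2 + m i ^ 2) with hN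
  set T := tvDist (gm d 0 m v) (gm d 1 m v)
  have hA2 : N / 48 ≤ 1 - aff d m v := by
    have h1 := Real.add_one_le_exp (N/24)
    have h3 : Real.exp (N/24) * Real.exp (-N/24) = 1 := by
      rw [← Real.exp_add]; ring_nf; simp
    have h4 := Real.exp_pos (-N/24)
    nlinarith
  set D := Real.sqrt N with hD
  have hD0 : 0 ≤ D := Real.sqrt_nonneg _
  have hDN : D ^ 2 = N := Real.sq_sqrt hN0
  rw [← hDN]
  suffices hs : D ≤ 50000 * T from pow_le_pow_left₀ hD0 hs 2
  rcases hD0.eq_or_lt with h0 | h0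
  · rw [← h0]; nlinarith
  rcases le_total (1/6) D with h6 | h6
  · nlinarith
  have hvD : ∀ i, |1 - v i| ≤ D := fun i => by
    rw [abs_sub_comm]; exact Real.abs_le_sqrt (hi i)
  have hr : 2 / (6 * D) = 1 / (3 * D) := by field_simp; norm_num
  have hrpos : 0 < 1 / (3 * D) := by positivity
  have hr1 : 1 ≤ 1 / (3 * D) := by rw [le_div_iff₀ (by positivity)]; linarith
  have hrD : ∀ i, 1 / (3 * D) * |1 - v i| ≤ 1/3 := fun i => by
    rw [div_mul_eq_mul_div, div_le_iff₀ (by positivity)]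
    have := hvD i; linarith
  have g1 := fun i => gval_le (1 / (3 * D)) (m i) (v i) (hv i) (hv1 i)
    (by rwa [abs_of_pos hrpos]) (by rw [abs_of_pos hrpos]; exact hrD i)
  have g2 := fun i => gval_le (-(1 / (3 * D))) (m i) (v i) (hv i) (hv1 i)
    (by rwa [abs_neg, abs_of_pos hrpos]) (by rw [abs_neg, abs_of_pos hrpos]; exact hrD i)
  have hexp : Real.exp (4/9) ≤ 9/5 := by
    have h1 := Real.add_one_le_exp (-(4/9:ℝ))
    have h3 : Real.exp (4/9) * Real.exp (-(4/9)) = 1 := by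
      rw [← Real.exp_add]; simp
    have := Real.exp_pos (4/9)
    nlinarith
  have hpr : ∀ r : ℝ, r ^ 2 = (1 / (3 * D)) ^ 2 →
      (∀ i, gval r (m i) (v i) ≤ Real.exp (4 * r ^ 2 * ((v i - 1) ^ 2 + m i ^ 2))) →
      ∏ i, gval r (m i) (v i) ≤ 9/5 := by
    intro r hr2 hg
    refine le_trans (Finset.prod_le_prod (fun j _ => gval_nonneg _ _ _) (fun j _ => hg j)) ?_
    rw [← Real.exp_sum, ← Finset.mul_sum, ← hN, hr2, ← hDN]
    refine le_trans (le_of_eq ?_) hexp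
    congr 1; field_simp; norm_num
  have key := tv_lower_moment d m v hv (6 * D) (450 * D) (by positivity) (by linarith)
    (by positivity) (by rw [hr]; exact fun i => (g1 i).1) (by rw [hr]; exact fun i => (g2 i).1)
  rw [hr] at key
  have b1 := hpr _ rfl (fun i => (g1 i).2)
  have b2 := hpr _ (by ring) (fun i => (g2 i).2)
  have c1 : D / 10800 ≤ 2 * (1 - aff d m v) / (450 * D) := by
    rw [le_div_iff₀ (by positivity)]; nlinarith
  have c2 : (6 * D) ^ 4 / (450 * D) ^ 3 = D * (1296 / 91125000) := by
    field_simp; norm_num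
  rw [c2] at key
  have c3 : D * (1296 / 91125000) * (∏ i, gval (1 / (3 * D)) (m i) (v i)
      + ∏ i, gval (-(1 / (3 * D))) (m i) (v i)) ≤ D * (1296 / 91125000) * (18/5) := by
    gcongr; linarith
  change _ ≤ 2 * T at key
  linarith

lemma tv_upper_diag (d : ℕ) (m v : Fin d → ℝ) (hv : ∀ i, 0 < v i) (δ : ℝ) (hδ : 0 < δ)
    (h : ∑ i, ((v i - 1) ^ 2 + m i ^ 2) ≤ δ ^ 2) :
    tvDist (gm d 0 m v) (gm d 1 m v) ≤ 3 * δ :=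
  tv_upper_aff d m v hv δ hδ ((aff_upper d m v hv).trans h)

/-! ### Gaussians in general position -/

/-- The Gaussian measure. -/
noncomputable def GN (d : ℕ) (μ : Fin d → ℝ) (S : Matrix (Fin d) (Fin d) ℝ) :
    Measure (Fin d → ℝ) :=
  volume.withDensity fun x => ENNReal.ofReal (gaussianPdf d μ S x)

theorem gm_one_eq (d : ℕ) (m v : Fin d → ℝ) (hv : ∀ i, 0 < v i) :
    gm d 1 m v = GN d m (Matrix.diagonal v) := by
  unfold gm GN
  congr 1
  funext x
  congr 1
  have hinv : (Matrix.diagonal v)⁻¹ = Matrix.diagonal (fun i => (v i)⁻¹) := by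
    apply Matrix.inv_eq_right_inv
    rw [Matrix.diagonal_mul_diagonal, ← Matrix.diagonal_one]
    congr 1
    funext i
    exact mul_inv_cancel₀ (hv i).ne'
  unfold gpd gaussianPdf
  rw [hinv, Matrix.det_diagonal]
  have h1 : (2 * Real.pi) ^ d * ∏ i, v i = ∏ i, (2 * Real.pi * v i) := by
    rw [Finset.prod_mul_distrib]; simp
  have h2 : Real.sqrt (∏ i, (2 * Real.pi * v i)) = ∏ i, Real.sqrt (2 * Real.pi * v i) := by
    have h0 : ∏ i, (2 * Real.pi * v i) = (∏ i, Real.sqrt (2 * Real.pi * v i)) ^ 2 := by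
      rw [← Finset.prod_pow]
      refine Finset.prod_congr rfl fun i _ => ?_
      rw [Real.sq_sqrt]
      have := hv i
      positivity
    rw [h0, Real.sqrt_sq (Finset.prod_nonneg fun i _ => Real.sqrt_nonneg _)]
  have h3 : -(1 / 2) * ((x - m) ⬝ᵥ ((Matrix.diagonal fun i => (v i)⁻¹) *ᵥ (x - m)))
      = ∑ i, (-(x i - m i) ^ 2 / (2 * v i)) := by
    simp only [dotProduct, Matrix.mulVec_diagonal, Finset.mul_sum, Pi.sub_apply]
    refine Finset.sum_congr rfl fun i _ => ?_
    have := (hv i).ne'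
    field_simp
  rw [h1, h2, h3, Real.exp_sum, ← Finset.prod_inv_distrib, ← Finset.prod_mul_distrib]
  refine Finset.prod_congr rfl fun i _ => ?_
  unfold gint
  have hs : Real.sqrt (v i) = Real.exp (Real.log (v i) / 2) := by
    rw [Real.exp_half, Real.exp_log (hv i)]
  rw [Real.sqrt_mul (by positivity) (v i), hs, mul_inv (Real.sqrt (2 * Real.pi)), ← Real.exp_neg, mul_assoc, ← Real.exp_add]
  congr 2
  ring

theorem gm_zero_eq (d : ℕ) (m v : Fin d → ℝ) :
    gm d 0 m v = GN d 0 1 := by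
  have : gm d 0 m v = gm d 1 0 1 := by
    unfold gm gpd gint
    simp [neg_div]
  rw [this, gm_one_eq d 0 1 (fun i => by simp)]
  rw [show Matrix.diagonal (1 : Fin d → ℝ) = 1 from Matrix.diagonal_one]

/-- affine change of coordinates -/
noncomputable def affEquiv (d : ℕ) (μ : Fin d → ℝ) (T : Matrix (Fin d) (Fin d) ℝ)
    (hT : T.det ≠ 0) : (Fin d → ℝ) ≃ᵐ (Fin d → ℝ) where
  toFun x := μ + T *ᵥ x
  invFun y := T⁻¹ *ᵥ (y - μ)
  left_inv x := by
    simp [Matrix.mulVec_mulVec, Matrix.nonsing_inv_mul T (isUnit_iff_ne_zero.2 hT)]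
  right_inv y := by
    simp [Matrix.mulVec_mulVec, Matrix.mul_nonsing_inv T (isUnit_iff_ne_zero.2 hT)]
  measurable_toFun := by
    have : Continuous fun x : Fin d → ℝ => μ + T *ᵥ x := by fun_prop
    exact this.measurable
  measurable_invFun := by
    have : Continuous fun y : Fin d → ℝ => T⁻¹ *ᵥ (y - μ) := by fun_prop
    exact this.measurable

theorem gaussianPdf_aff (d : ℕ) (μ m : Fin d → ℝ) (T S : Matrix (Fin d) (Fin d) ℝ)
    (hT : T.det ≠ 0) (x : Fin d → ℝ) :
    gaussianPdf d m S x =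
      |T.det| * gaussianPdf d (μ + T *ᵥ m) (T * S * Tᵀ) (μ + T *ᵥ x) := by
  unfold gaussianPdf
  have hu : IsUnit T.det := isUnit_iff_ne_zero.2 hT
  have h1 : μ + T *ᵥ x - (μ + T *ᵥ m) = T *ᵥ (x - m) := by
    rw [Matrix.mulVec_sub]; abel
  have h2 : (T *ᵥ (x - m)) ⬝ᵥ ((T * S * Tᵀ)⁻¹ *ᵥ (T *ᵥ (x - m)))
      = (x - m) ⬝ᵥ (S⁻¹ *ᵥ (x - m)) := by
    rw [Matrix.mul_inv_rev, Matrix.mul_inv_rev, Matrix.mulVec_mulVec, ← mul_assoc, mul_assoc,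
      Matrix.nonsing_inv_mul T hu, mul_one, ← Matrix.mulVec_mulVec]
    rw [Matrix.dotProduct_mulVec, Matrix.vecMul_mulVec, ← Matrix.transpose_nonsing_inv,
      ← Matrix.transpose_mul, Matrix.nonsing_inv_mul T hu]
    simp
  have h3 : Real.sqrt ((2 * Real.pi) ^ d * (T * S * Tᵀ).det)
      = |T.det| * Real.sqrt ((2 * Real.pi) ^ d * S.det) := by
    rw [Matrix.det_mul, Matrix.det_mul, Matrix.det_transpose,
      show (2 * Real.pi) ^ d * (T.det * S.det * T.det)
        = T.det ^ 2 * ((2 * Real.pi) ^ d * S.det) by ring,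
      Real.sqrt_mul (sq_nonneg _), Real.sqrt_sq_eq_abs]
  rw [h1, h2, h3, mul_inv, ← mul_assoc, ← mul_assoc, mul_inv_cancel₀ (abs_ne_zero.2 hT), one_mul]

theorem measurable_gaussianPdf (d : ℕ) (m : Fin d → ℝ) (S : Matrix (Fin d) (Fin d) ℝ) :
    Measurable (gaussianPdf d m S) := by
  have : Continuous (gaussianPdf d m S) := by
    unfold gaussianPdf
    fun_prop
  exact this.measurable

theorem GN_map (d : ℕ) (μ m : Fin d → ℝ) (T S : Matrix (Fin d) (Fin d) ℝ)
    (hT : T.det ≠ 0) :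
    (GN d m S).map (affEquiv d μ T hT) = GN d (μ + T *ᵥ m) (T * S * Tᵀ) := by
  ext E hE
  rw [MeasurableEquiv.map_apply]
  unfold GN
  rw [withDensity_apply _ ((affEquiv d μ T hT).measurable hE), withDensity_apply _ hE,
    ← lintegral_indicator ((affEquiv d μ T hT).measurable hE), ← lintegral_indicator hE]
  set g : (Fin d → ℝ) → ENNReal := E.indicator fun x =>
    ENNReal.ofReal (gaussianPdf d (μ + T *ᵥ m) (T * S * Tᵀ) x) with hg
  have hgm : Measurable g :=
    ((measurable_gaussianPdf d _ _).ennreal_ofReal).indicator hE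
  have hcv : ∫⁻ y, g (μ + y) = ENNReal.ofReal |T.det| * ∫⁻ x, g (μ + T *ᵥ x) := by
    have h1 : ∫⁻ x, g (μ + T *ᵥ x) = ∫⁻ y, g (μ + y) ∂(Measure.map (Matrix.toLin' T) volume) := by
      rw [lintegral_map]
      · simp [Matrix.toLin'_apply]
      · exact hgm.comp (measurable_const_add μ)
      · exact (LinearMap.continuous_of_finiteDimensional _).measurable
    rw [h1, Real.map_matrix_volume_pi_eq_smul_volume_pi hT, lintegral_smul_measure, smul_eq_mul,
      ← mul_assoc, ← ENNReal.ofReal_mul (abs_nonneg _), ← abs_mul, mul_inv_cancel₀ hT]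
    simp
  rw [← lintegral_add_left_eq_self g μ, hcv, ← lintegral_const_mul']
  · refine lintegral_congr fun x => ?_
    have hm : (x ∈ (affEquiv d μ T hT) ⁻¹' E) ↔ μ + T *ᵥ x ∈ E := Iff.rfl
    by_cases hx : μ + T *ᵥ x ∈ E
    · rw [Set.indicator_of_mem (hm.2 hx), hg, Set.indicator_of_mem hx,
        ← ENNReal.ofReal_mul (abs_nonneg _), ← gaussianPdf_aff d μ m T S hT x]
    · rw [Set.indicator_of_notMem (fun h => hx (hm.1 h)), hg, Set.indicator_of_notMem hx]
      simp
  · exact ENNReal.ofReal_ne_top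

theorem tv_aff (d : ℕ) (μ m m' : Fin d → ℝ) (T S S' : Matrix (Fin d) (Fin d) ℝ)
    (hT : T.det ≠ 0) :
    tvDist (GN d (μ + T *ᵥ m) (T * S * Tᵀ)) (GN d (μ + T *ᵥ m') (T * S' * Tᵀ)) =
      tvDist (GN d m S) (GN d m' S') := by
  rw [← GN_map d μ m T S hT, ← GN_map d μ m' T S' hT, tvDist_map]

theorem spectral (d : ℕ) (S : Matrix (Fin d) (Fin d) ℝ) (hS : S.PosDef) :
    ∃ (U : Matrix (Fin d) (Fin d) ℝ) (D : Fin d → ℝ), Uᵀ * U = 1 ∧ U * Uᵀ = 1 ∧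
      (∀ i, 0 < D i) ∧ S = U * Matrix.diagonal D * Uᵀ := by
  refine ⟨hS.1.eigenvectorUnitary, hS.1.eigenvalues, ?_, ?_, hS.eigenvalues_pos, ?_⟩
  · have := Unitary.coe_star_mul_self hS.1.eigenvectorUnitary
    simpa [Matrix.star_eq_conjTranspose] using this
  · have := Unitary.coe_mul_star_self hS.1.eigenvectorUnitary
    simpa [Matrix.star_eq_conjTranspose] using this
  · have := hS.1.spectral_theorem
    rw [Unitary.conjStarAlgAut_apply] at this
    simpa [Matrix.star_eq_conjTranspose, Function.comp_def] using this

/-- squared Frobenius norm -/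
noncomputable def fro (d : ℕ) (A : Matrix (Fin d) (Fin d) ℝ) : ℝ := ∑ i, ∑ j, A i j ^ 2

theorem fro_eq (d : ℕ) (A : Matrix (Fin d) (Fin d) ℝ) : fro d A = (A * Aᵀ).trace := by
  unfold fro
  simp [Matrix.trace, Matrix.mul_apply, sq]

theorem fro_conj (d : ℕ) (U A : Matrix (Fin d) (Fin d) ℝ) (h : Uᵀ * U = 1) :
    fro d (U * A * Uᵀ) = fro d A := by
  rw [fro_eq, fro_eq]
  simp only [Matrix.transpose_mul, Matrix.transpose_transpose]
  rw [show U * A * Uᵀ * (U * (Aᵀ * Uᵀ)) = U * (A * (Uᵀ * U) * (Aᵀ * Uᵀ)) by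
    simp only [mul_assoc], h, Matrix.trace_mul_comm]
  rw [show A * 1 * (Aᵀ * Uᵀ) * U = A * Aᵀ * (Uᵀ * U) by simp only [mul_assoc, one_mul], h, mul_one]

theorem fro_diag (d : ℕ) (v : Fin d → ℝ) :
    fro d (Matrix.diagonal v - 1) = ∑ i, (v i - 1) ^ 2 := by
  unfold fro
  refine Finset.sum_congr rfl fun i _ => ?_
  rw [Finset.sum_eq_single i]
  · simp
  · intro j _ hj
    simp [Matrix.diagonal_apply_ne _ hj.symm, Matrix.one_apply_ne hj.symm]
  · simp

theorem sum_sq_orth (d : ℕ) (U : Matrix (Fin d) (Fin d) ℝ) (h : Uᵀ * U = 1) (m : Fin d → ℝ) :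
    ∑ i, ((U *ᵥ m) i) ^ 2 = ∑ i, m i ^ 2 := by
  have h1 : ∀ w : Fin d → ℝ, ∑ i, w i ^ 2 = w ⬝ᵥ w := fun w => by simp [dotProduct, sq]
  rw [h1, h1, Matrix.dotProduct_mulVec, Matrix.vecMul_mulVec, h]
  simp

/-- diagonalisation of the comparison with the standard Gaussian -/
theorem reduce (d : ℕ) (m : Fin d → ℝ) (S : Matrix (Fin d) (Fin d) ℝ) (hS : S.PosDef) :
    ∃ (m' v : Fin d → ℝ), (∀ i, 0 < v i) ∧
      tvDist (GN d 0 1) (GN d m S) = tvDist (gm d 0 m' v) (gm d 1 m' v) ∧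
      ∑ i, ((v i - 1) ^ 2 + m' i ^ 2) = fro d (S - 1) + ∑ i, m i ^ 2 := by
  obtain ⟨U, D, h1, h2, hD, rfl⟩ := spectral d S hS
  have hdet : U.det ≠ 0 := by
    intro h0
    have := congrArg Matrix.det h1
    simp [Matrix.det_mul, h0] at this
  refine ⟨Uᵀ *ᵥ m, D, hD, ?_, ?_⟩
  · rw [gm_zero_eq, gm_one_eq d _ _ hD, ← tv_aff d 0 0 (Uᵀ *ᵥ m) U 1 (Matrix.diagonal D) hdet]
    simp [Matrix.mulVec_mulVec, h2]
  · rw [Finset.sum_add_distrib, sum_sq_orth d Uᵀ (by simpa using h2), ← fro_diag,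
      ← fro_conj d U _ h1]
    congr 2
    rw [mul_sub, sub_mul, mul_one, h2]

theorem tv_lower_std (d : ℕ) (m : Fin d → ℝ) (S : Matrix (Fin d) (Fin d) ℝ) (hS : S.PosDef)
    (h : tvDist (GN d 0 1) (GN d m S) ≤ 1 / 300) :
    fro d (S - 1) + ∑ i, m i ^ 2 ≤ (50000 * tvDist (GN d 0 1) (GN d m S)) ^ 2 ∧
      fro d (S - 1) + ∑ i, m i ^ 2 ≤ 1 / 10 := by
  obtain ⟨m', v, hv, e1, e2⟩ := reduce d m S hS
  rw [e1] at h ⊢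
  rw [← e2]
  exact tv_lower_diag d m' v hv h

theorem tv_upper_std (d : ℕ) (m : Fin d → ℝ) (S : Matrix (Fin d) (Fin d) ℝ) (hS : S.PosDef)
    (δ : ℝ) (hδ : 0 < δ) (h : fro d (S - 1) + ∑ i, m i ^ 2 ≤ δ ^ 2) :
    tvDist (GN d 0 1) (GN d m S) ≤ 3 * δ := by
  obtain ⟨m', v, hv, e1, e2⟩ := reduce d m S hS
  rw [e1]
  rw [← e2] at h
  exact tv_upper_diag d m' v hv δ hδ h

theorem posDef_conj (d : ℕ) (W T S : Matrix (Fin d) (Fin d) ℝ) (h : T * W = 1) (hS : S.PosDef) :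
    (W * S * Wᵀ).PosDef := by
  have hinj : Function.Injective (Wᵀ).mulVec := by
    intro x y hxy
    have h2 : W * T = 1 := mul_eq_one_comm.1 h
    have h3 : Tᵀ * Wᵀ = 1 := by rw [← Matrix.transpose_mul, h2, Matrix.transpose_one]
    have := congrArg (fun z => Tᵀ *ᵥ z) hxy
    simpa [Matrix.mulVec_mulVec, h3] using this
  have := hS.conjTranspose_mul_mul_same hinj
  simpa using this

/-- Square roots of positive definite matrices. -/
theorem root (d : ℕ) (S : Matrix (Fin d) (Fin d) ℝ) (hS : S.PosDef) :
    ∃ (T W : Matrix (Fin d) (Fin d) ℝ), T * W = 1 ∧ W * T = 1 ∧ S = T * Tᵀ ∧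
      (fro d (S - 1) ≤ 1 / 4 → ∀ A m, fro d (W * A * Wᵀ) + ∑ i, ((W *ᵥ m) i) ^ 2
        ≤ 4 * (fro d A + ∑ i, m i ^ 2)) := by
  obtain ⟨U, D, h1, h2, hD, rfl⟩ := spectral d S hS
  have hs : ∀ i, Real.sqrt (D i) ≠ 0 := fun i => (Real.sqrt_pos.2 (hD i)).ne'
  have e1 : (Matrix.diagonal fun i => Real.sqrt (D i)) *
      (Matrix.diagonal fun i => (Real.sqrt (D i))⁻¹) = 1 := by
    rw [Matrix.diagonal_mul_diagonal, ← Matrix.diagonal_one]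
    congr 1
    funext i
    exact mul_inv_cancel₀ (hs i)
  have e2 : (Matrix.diagonal fun i => Real.sqrt (D i)) *
      (Matrix.diagonal fun i => Real.sqrt (D i)) = Matrix.diagonal D := by
    rw [Matrix.diagonal_mul_diagonal]
    congr 1
    funext i
    exact Real.mul_self_sqrt (hD i).le
  have hTW : (U * (Matrix.diagonal fun i => Real.sqrt (D i))) *
      ((Matrix.diagonal fun i => (Real.sqrt (D i))⁻¹) * Uᵀ) = 1 := by
    rw [mul_assoc, ← mul_assoc (Matrix.diagonal _), e1, one_mul, h2]
  refine ⟨U * (Matrix.diagonal fun i => Real.sqrt (D i)),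
    (Matrix.diagonal fun i => (Real.sqrt (D i))⁻¹) * Uᵀ, hTW, mul_eq_one_comm.1 hTW, ?_, ?_⟩
  · rw [Matrix.transpose_mul, Matrix.diagonal_transpose, ← e2]
    simp only [mul_assoc]
  · intro hf A m
    have hf' : ∑ i, (D i - 1) ^ 2 ≤ 1 / 4 := by
      rw [← fro_diag, ← fro_conj d U _ h1]
      rwa [mul_sub, sub_mul, mul_one, h2]
    have hDi : ∀ i, 1 / 2 ≤ D i := by
      intro i
      have := (Finset.single_le_sum (f := fun i => (D i - 1) ^ 2)
        (fun i _ => sq_nonneg _) (Finset.mem_univ i)).trans hf'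
      nlinarith
    have hinv : ∀ i, ((Real.sqrt (D i))⁻¹) ^ 2 ≤ 2 := by
      intro i
      rw [inv_pow, Real.sq_sqrt (hD i).le]
      have := inv_anti₀ (by norm_num) (hDi i)
      norm_num at this
      exact this
    have hU' : (Uᵀ)ᵀ * Uᵀ = 1 := by simpa using h2
    rw [mul_add]
    refine add_le_add ?_ ?_
    · have hW : (Matrix.diagonal fun i => (Real.sqrt (D i))⁻¹) * Uᵀ * A *
          ((Matrix.diagonal fun i => (Real.sqrt (D i))⁻¹) * Uᵀ)ᵀ =
          (Matrix.diagonal fun i => (Real.sqrt (D i))⁻¹) * (Uᵀ * A * (Uᵀ)ᵀ) *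
          (Matrix.diagonal fun i => (Real.sqrt (D i))⁻¹) := by
        rw [Matrix.transpose_mul, Matrix.diagonal_transpose]
        simp only [mul_assoc]
      rw [hW, ← fro_conj d Uᵀ A hU']
      unfold fro
      rw [Finset.mul_sum]
      refine Finset.sum_le_sum fun i _ => ?_
      rw [Finset.mul_sum]
      refine Finset.sum_le_sum fun j _ => ?_
      rw [Matrix.mul_diagonal, Matrix.diagonal_mul, mul_pow, mul_pow]
      have a := hinv i
      have b := hinv j
      set z := (Uᵀ * A * (Uᵀ)ᵀ) i j
      calc _ = (((Real.sqrt (D i))⁻¹) ^ 2 * ((Real.sqrt (D j))⁻¹) ^ 2) * z ^ 2 := by ring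
        _ ≤ (2 * 2) * z ^ 2 := by gcongr
        _ = _ := by ring
    · rw [← sum_sq_orth d Uᵀ hU' m, Finset.mul_sum]
      refine Finset.sum_le_sum fun i _ => ?_
      rw [← Matrix.mulVec_mulVec, Matrix.mulVec_diagonal, mul_pow]
      have a := hinv i
      have := sq_nonneg ((Uᵀ *ᵥ m) i)
      nlinarith

/-- Moving one Gaussian to standard position. -/
theorem tv_coord (d : ℕ) (m₁ m₂ : Fin d → ℝ) (T W S : Matrix (Fin d) (Fin d) ℝ)
    (h1 : T * W = 1) :
    tvDist (GN d m₁ (T * Tᵀ)) (GN d m₂ S) =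
      tvDist (GN d 0 1) (GN d (W *ᵥ (m₂ - m₁)) (W * S * Wᵀ)) := by
  have hdet : T.det ≠ 0 := by
    intro h0
    have := congrArg Matrix.det h1
    simp [Matrix.det_mul, h0] at this
  have h2 : Wᵀ * Tᵀ = 1 := by rw [← Matrix.transpose_mul, h1, Matrix.transpose_one]
  rw [← tv_aff d m₁ 0 (W *ᵥ (m₂ - m₁)) T 1 (W * S * Wᵀ) hdet]
  rw [show T * (W * S * Wᵀ) * Tᵀ = (T * W) * S * (Wᵀ * Tᵀ) by simp only [mul_assoc], h1, h2]
  simp [Matrix.mulVec_mulVec, h1]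

theorem tv_upper (d : ℕ) (m₁ m₂ : Fin d → ℝ) (S₁ S₂ : Matrix (Fin d) (Fin d) ℝ)
    (hS₁ : S₁.PosDef) (hS₂ : S₂.PosDef) (hf : fro d (S₁ - 1) ≤ 1 / 4) (δ : ℝ) (hδ : 0 < δ)
    (h : 4 * (fro d (S₂ - S₁) + ∑ i, (m₂ i - m₁ i) ^ 2) ≤ δ ^ 2) :
    tvDist (GN d m₁ S₁) (GN d m₂ S₂) ≤ 3 * δ := by
  obtain ⟨T, W, h1, h2, rfl, hb⟩ := root d S₁ hS₁
  rw [tv_coord d m₁ m₂ T W S₂ h1]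
  have h3 : Tᵀ * Wᵀ = 1 := by rw [← Matrix.transpose_mul, h2, Matrix.transpose_one]
  refine tv_upper_std d _ _ (posDef_conj d W T S₂ h1 hS₂) δ hδ (le_trans ?_ h)
  have := hb hf (S₂ - T * Tᵀ) (m₂ - m₁)
  rw [mul_sub, sub_mul, show W * (T * Tᵀ) * Wᵀ = (W * T) * (Tᵀ * Wᵀ) by simp only [mul_assoc],
    h2, h3, one_mul] at this
  exact this

/-- coordinates of a Gaussian relative to the standard one -/
noncomputable def coordPt (d : ℕ) (p : (Fin d → ℝ) × Matrix (Fin d) (Fin d) ℝ) :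
    EuclideanSpace ℝ (Fin d ⊕ Fin d × Fin d) :=
  WithLp.toLp 2 (Sum.elim p.1 fun q => p.2 q.1 q.2)

theorem coordPt_norm (d : ℕ) (p : (Fin d → ℝ) × Matrix (Fin d) (Fin d) ℝ) :
    ‖coordPt d p‖ ^ 2 = fro d p.2 + ∑ i, p.1 i ^ 2 := by
  rw [EuclideanSpace.norm_sq_eq, Fintype.sum_sum_type, Fintype.sum_prod_type, add_comm]
  simp [coordPt, fro]

theorem coordPt_sub (d : ℕ) (p q : (Fin d → ℝ) × Matrix (Fin d) (Fin d) ℝ) :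
    coordPt d p - coordPt d q = coordPt d (p - q) := by
  ext i
  rcases i with i | i <;> simp [coordPt]

/-- The local size bound for separated families. -/
theorem local_card (d : ℕ) (α : ℝ) (hα : 0 < α) (hα' : α ≤ 1 / 600)
    (g : Measure (Fin d → ℝ)) (hg : g ∈ Gd d) (s : Finset (Measure (Fin d → ℝ)))
    (hs : ∀ f ∈ s, f ∈ Gd d) (hsep : ∀ f ∈ s, ∀ f' ∈ s, f ≠ f' → α < tvDist f f')
    (hloc : ∀ f ∈ s, tvDist f g ≤ 2 * α) :
    (s.card : ℝ) ≤ (1200001 : ℝ) ^ (d + d * d) := by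
  classical
  obtain ⟨μ₀, S₀, hS₀, rfl⟩ := hg
  change ∀ f ∈ s, tvDist f (GN d μ₀ S₀) ≤ 2 * α at hloc
  obtain ⟨T, W, h1, h2, rfl, -⟩ := root d S₀ hS₀
  have hdet : T.det ≠ 0 := by
    intro h0
    have := congrArg Matrix.det h1
    simp [Matrix.det_mul, h0] at this
  have h3 : Wᵀ * Tᵀ = 1 := by rw [← Matrix.transpose_mul, h1, Matrix.transpose_one]
  have key : ∀ f : s, ∃ p : (Fin d → ℝ) × Matrix (Fin d) (Fin d) ℝ, p.2.PosDef ∧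
      f.1 = GN d (μ₀ + T *ᵥ p.1) (T * p.2 * Tᵀ) ∧
      tvDist (GN d 0 1) (GN d p.1 p.2) ≤ 2 * α := by
    rintro ⟨f, hf⟩
    obtain ⟨m, S, hS, rfl⟩ := hs f hf
    have hl := hloc _ hf
    change tvDist (GN d m S) (GN d μ₀ (T * Tᵀ)) ≤ 2 * α at hl
    rw [tvDist_comm, tv_coord d μ₀ m T W S h1] at hl
    refine ⟨(W *ᵥ (m - μ₀), W * S * Wᵀ), posDef_conj d W T S h1 hS, ?_, hl⟩
    change GN d m S = _
    simp only
    rw [show T * (W * S * Wᵀ) * Tᵀ = (T * W) * S * (Wᵀ * Tᵀ) by simp only [mul_assoc], h1, h3]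
    simp [Matrix.mulVec_mulVec, h1]
  choose p hp1 hp2 hp3 using key
  have hlow : ∀ f : s, fro d ((p f).2 - 1) + ∑ i, (p f).1 i ^ 2 ≤ (100000 * α) ^ 2 ∧
      fro d ((p f).2 - 1) + ∑ i, (p f).1 i ^ 2 ≤ 1 / 10 := by
    intro f
    obtain ⟨a, b⟩ := tv_lower_std d (p f).1 (p f).2 (hp1 f) ((hp3 f).trans (by linarith))
    refine ⟨a.trans ?_, b⟩
    have h0 : 0 ≤ tvDist (GN d 0 1) (GN d (p f).1 (p f).2) :=
      Real.iSup_nonneg fun _ => abs_nonneg _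
    have := hp3 f
    refine pow_le_pow_left₀ (by positivity) (by linarith) 2
  let P : s → EuclideanSpace ℝ (Fin d ⊕ Fin d × Fin d) :=
    fun f => coordPt d ((p f).1, (p f).2 - 1)
  have hsepP : ∀ f f' : s, f ≠ f' → α / 6 ≤ ‖P f - P f'‖ := by
    intro f f' hne
    by_contra hlt
    push Not at hlt
    have hsq : ‖P f - P f'‖ ^ 2 ≤ (α / 6) ^ 2 := by
      have := norm_nonneg (P f - P f')
      nlinarith
    rw [coordPt_sub, coordPt_norm] at hsq
    have hfr : fro d ((p f').2 - 1) ≤ 1 / 4 := by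
      have : 0 ≤ ∑ i, (p f').1 i ^ 2 := Finset.sum_nonneg fun i _ => sq_nonneg _
      linarith [(hlow f').2]
    have hup := tv_upper d (p f').1 (p f).1 (p f').2 (p f).2 (hp1 f') (hp1 f) hfr (α / 3)
      (by positivity) (by
        simp only [Prod.mk_sub_mk, sub_sub_sub_cancel_right, Pi.sub_apply] at hsq
        nlinarith)
    have hgt := hsep f'.1 f'.2 f.1 f.2 (fun h => hne (Subtype.ext h.symm))
    rw [hp2 f, hp2 f', tv_aff d μ₀ _ _ T _ _ hdet] at hgt
    linarith
  have hinj : Function.Injective P := by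
    intro f f' h
    by_contra hne
    have := hsepP f f' hne
    rw [h, sub_self, norm_zero] at this
    linarith
  have hpack := packing_bound (Finset.univ.image P) (100000 * α) (α / 6) (by positivity)
    (by positivity) (by
      intro c hc
      obtain ⟨f, -, rfl⟩ := Finset.mem_image.1 hc
      refine abs_le_of_sq_le_sq' ?_ (by positivity) |>.2
      rw [coordPt_norm]
      exact (hlow f).1) (by
      intro c hc c' hc' hne
      obtain ⟨f, -, rfl⟩ := Finset.mem_image.1 hc
      obtain ⟨f', -, rfl⟩ := Finset.mem_image.1 hc'
      exact hsepP f f' (fun h => hne (by rw [h])))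
  rw [Finset.card_image_of_injective _ hinj] at hpack
  have he : (1 + 2 * (100000 * α) / (α / 6) : ℝ) = 1200001 := by
    field_simp
    norm_num
  rw [he] at hpack
  simpa using hpack

theorem exists_cover (d : ℕ) (α : ℝ) (hα : 0 < α) :
    ∃ C : Set (Measure (Fin d → ℝ)), C ⊆ Gd d ∧
      (∀ f ∈ C, ∀ f' ∈ C, f ≠ f' → α < tvDist f f') ∧
      ∀ g ∈ Gd d, ∃ g' ∈ C, tvDist g g' ≤ α := by
  let F : Set (Set (Measure (Fin d → ℝ))) :=
    {C | C ⊆ Gd d ∧ ∀ f ∈ C, ∀ f' ∈ C, f ≠ f' → α < tvDist f f'}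
  obtain ⟨C, hC⟩ := zorn_subset F (by
    intro c hc hch
    refine ⟨⋃₀ c, ⟨?_, ?_⟩, fun s hs => Set.subset_sUnion_of_mem hs⟩
    · exact Set.sUnion_subset fun s hs => (hc hs).1
    · rintro f ⟨s, hs, hfs⟩ f' ⟨s', hs', hfs'⟩ hne
      rcases hch.total hs hs' with h | h
      · exact (hc hs').2 f (h hfs) f' hfs' hne
      · exact (hc hs).2 f hfs f' (h hfs') hne)
  refine ⟨C, hC.prop.1, hC.prop.2, ?_⟩
  intro g hg
  by_contra hno
  push Not at hno
  have hins : insert g C ∈ F := by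
    refine ⟨Set.insert_subset hg hC.prop.1, ?_⟩
    rintro f (rfl | hf) f' (rfl | hf') hne
    · exact absurd rfl hne
    · exact hno f' hf'
    · rw [tvDist_comm]; exact hno f hf
    · exact hC.prop.2 f hf f' hf' hne
  have hgC : g ∈ C := hC.le_of_ge hins (Set.subset_insert g C) (Set.mem_insert g C)
  have := hno g hgC
  rw [tvDist_self] at this
  linarith

theorem final_num (d : ℕ) (hd : 1 ≤ d) :
    (1200001 : ℝ) ^ (d + d * d) ≤ (2 : ℝ) ^ ((42 : ℝ) * (d : ℝ) ^ 2) := by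
  have h : (42 : ℝ) * (d : ℝ) ^ 2 = ((42 * d ^ 2 : ℕ) : ℝ) := by push_cast; ring
  rw [h, Real.rpow_natCast]
  calc (1200001 : ℝ) ^ (d + d * d) ≤ ((2 : ℝ) ^ 21) ^ (d + d * d) := by
        gcongr; norm_num
    _ = (2 : ℝ) ^ (21 * (d + d * d)) := by rw [pow_mul]
    _ ≤ _ := by
        apply pow_le_pow_right₀ (by norm_num)
        nlinarith

theorem statement13 :
    ∃ c : ℝ, 0 < c ∧ ∀ d : ℕ, 1 ≤ d → ∀ α : ℝ, α ∈ Set.Ioc (0 : ℝ) (1 / 600) →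
      ∃ C : Set (Measure (Fin d → ℝ)), C ⊆ Gd d ∧
        (∀ g ∈ Gd d, ∃ g' ∈ C, tvDist g g' ≤ α) ∧
        ∀ g ∈ Gd d, {g' ∈ C | tvDist g' g ≤ 2 * α}.Finite ∧
          (({g' ∈ C | tvDist g' g ≤ 2 * α}.ncard : ℝ) ≤ (2 : ℝ) ^ (c * (d : ℝ) ^ 2)) := by
  refine ⟨42, by norm_num, fun d hd α hα => ?_⟩
  obtain ⟨C, hC1, hC2, hC3⟩ := exists_cover d α hα.1
  refine ⟨C, hC1, hC3, fun g hg => ?_⟩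
  have hb : ∀ s : Finset (Measure (Fin d → ℝ)), (s : Set _) ⊆ {g' ∈ C | tvDist g' g ≤ 2 * α} →
      (s.card : ℝ) ≤ (1200001 : ℝ) ^ (d + d * d) := fun s hs =>
    local_card d α hα.1 hα.2 g hg s (fun f hf => hC1 (hs hf).1)
      (fun f hf f' hf' hne => hC2 f (hs hf).1 f' (hs hf').1 hne) (fun f hf => (hs hf).2)
  have hfin : {g' ∈ C | tvDist g' g ≤ 2 * α}.Finite := by
    by_contra hinf
    obtain ⟨t, ht, hcard⟩ := Set.Infinite.exists_subset_card_eq hinf (1200001 ^ (d + d * d) + 1)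
    have := hb t ht
    rw [hcard] at this
    push_cast at this
    linarith
  refine ⟨hfin, ?_⟩
  rw [Set.ncard_eq_toFinset_card _ hfin]
  exact (hb hfin.toFinset (by simp)).trans (final_num d hd)
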